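/- Let 𝒫 be a nonempty admissible, linearly repetitive set of abstract patterns in ℝ^d. Then the translation action of ℝ^d on Ω(𝒫), given by t·T = T − t = {m − t : m ∈ T}, is uniquely ergodic: there exists exactly one translation-invariant Borel probability measure on the compact metric space Ω(𝒫). -/

import Mathlib

open Metric Set Filter MeasureTheory Topology

noncomputable section

/-- Points of `ℝ^d`. -/
abbrev Pt (d : ℕ) := EuclideanSpace ℝ (Fin d)

variable (d : ℕ)

/-- A tile: a subset of `ℝ^d` homeomorphic to the closed unit ball. -/
def IsTile (m : Set (Pt d)) : Prop :=
  Nonempty (m ≃ₜ (Metric.closedBall (0 : Pt d) 1))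

/-- A pattern: a finite nonempty collection of tiles whose interiors are pairwise disjoint. -/
def IsPattern (M : Set (Set (Pt d))) : Prop :=
  M.Finite ∧ M.Nonempty ∧ (∀ m ∈ M, IsTile d m) ∧
    M.Pairwise fun m m' => interior m ∩ interior m' = ∅

/-- A tiling of `ℝ^d`: a collection of tiles with pairwise disjoint interiors covering `ℝ^d`. -/
def IsTiling (T : Set (Set (Pt d))) : Prop :=
  (∀ m ∈ T, IsTile d m) ∧
    (T.Pairwise fun m m' => interior m ∩ interior m' = ∅) ∧ ⋃₀ T = Set.univ

/-- Translation of a pattern by `t`. -/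
def patTrans (t : Pt d) (M : Set (Set (Pt d))) : Set (Set (Pt d)) :=
  (fun m => (fun x => x + t) '' m) '' M

/-- Support (underlying set) of a pattern. -/
def supp (M : Set (Set (Pt d))) : Set (Pt d) := ⋃₀ M

/-- Inner radius: the largest `r` such that some closed ball of radius `r` fits inside `s(M)`. -/
def rIn (M : Set (Set (Pt d))) : ℝ :=
  sSup {r : ℝ | ∃ x : Pt d, Metric.closedBall x r ⊆ supp d M}

/-- Outer radius: the smallest `r` such that some closed ball of radius `r` contains `s(M)`. -/
def rOut (M : Set (Set (Pt d))) : ℝ :=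
  sInf {r : ℝ | ∃ x : Pt d, supp d M ⊆ Metric.closedBall x r}

/-- The pattern class of `P` is a subpattern of (the class of) `Q`:
some translate of `P` is contained in `Q`. -/
def SubpatternClass (P Q : Set (Set (Pt d))) : Prop :=
  ∃ t : Pt d, patTrans d t P ⊆ Q

/-- A set of abstract patterns is modelled as a translation-closed set `Ps` of concrete
patterns (the union of the pattern classes).  `Admissible` encodes conditions
(i)–(iii) of Definition 2.1. -/
structure Admissible (Ps : Set (Set (Set (Pt d)))) : Prop where
  pattern : ∀ P ∈ Ps, IsPattern d P
  transClosed : ∀ (t : Pt d), ∀ P ∈ Ps, patTrans d t P ∈ Ps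
  subClosed : ∀ P ∈ Ps, ∀ Q : Set (Set (Pt d)), IsPattern d Q → Q ⊆ P → Q ∈ Ps
  tileBounds : ∃ rmin rmax : ℝ, 0 < rmin ∧ rmin ≤ rmax ∧
    ∀ m : Set (Pt d), ({m} : Set (Set (Pt d))) ∈ Ps →
      rmin ≤ rIn d {m} ∧ rIn d {m} ≤ rOut d {m} ∧ rOut d {m} ≤ rmax
  extend : ∀ P ∈ Ps, (0 : Pt d) ∈ supp d P → ∀ r : ℝ, 0 < r →
    ∃ Q ∈ Ps, P ⊆ Q ∧ Metric.closedBall (0 : Pt d) r ⊆ supp d Q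

/-- Linear repetitivity of a (translation-closed) set of patterns. -/
def LinearlyRepetitive (Ps : Set (Set (Set (Pt d)))) : Prop :=
  ∃ c : ℝ, 0 < c ∧ ∀ P ∈ Ps, 1 ≤ rOut d P →
    ∀ Q ∈ Ps, c * rOut d P ≤ rIn d Q → SubpatternClass d P Q

/-- The box determined by corner functions `a b : Fin d → ℝ`. -/
def boxSet (a b : Fin d → ℝ) : Set (Pt d) := {x | ∀ j, x j ∈ Set.Icc (a j) (b j)}

/-- `B` is a box. -/
def IsBox (B : Set (Pt d)) : Prop :=
  ∃ a b : Fin d → ℝ, (∀ j, a j < b j) ∧ B = boxSet d a b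

/-- `B` is an `r`-box: all side lengths lie in `[r, 2r]`. -/
def IsRBox (r : ℝ) (B : Set (Pt d)) : Prop :=
  ∃ a b : Fin d → ℝ, (∀ j, a j < b j) ∧ B = boxSet d a b ∧
    ∀ j, r ≤ b j - a j ∧ b j - a j ≤ 2 * r

/-- Width of a box: the minimum of its side lengths. -/
def widthOf (B : Set (Pt d)) : ℝ :=
  ⨅ j : Fin d, (sSup ((fun x : Pt d => x j) '' B) - sInf ((fun x : Pt d => x j) '' B))

/-- Volume of a subset of `ℝ^d`. -/
def volOf (B : Set (Pt d)) : ℝ := (volume B).toReal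

/-- Restriction `M ∩ B` of a pattern or tiling `M` to `B`. -/
def patRestrict (M : Set (Set (Pt d))) (B : Set (Pt d)) : Set (Set (Pt d)) :=
  {s | ∃ m ∈ M, (m ∩ interior B).Nonempty ∧ s = m ∩ B}

/-- The set `Ps_B` of box-patterns derived from `Ps` (concrete representatives). -/
def BoxPatterns (Ps : Set (Set (Set (Pt d)))) : Set (Set (Set (Pt d))) :=
  {Q | ∃ P ∈ Ps, ∃ B : Set (Pt d), IsBox d B ∧ B ⊆ supp d P ∧ Q = patRestrict d P B}

/-- The set `Ps(r)` of `r`-patterns derived from `Ps`. -/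
def RPatterns (Ps : Set (Set (Set (Pt d)))) (r : ℝ) : Set (Set (Set (Pt d))) :=
  {Q | ∃ P ∈ Ps, ∃ B : Set (Pt d), IsRBox d r B ∧ B ⊆ supp d P ∧ Q = patRestrict d P B}

/-- Width of a box-pattern. -/
def patWidth (M : Set (Set (Pt d))) : ℝ := widthOf d (supp d M)

/-- Volume of a box-pattern. -/
def patVol (M : Set (Set (Pt d))) : ℝ := volOf d (supp d M)

/-- A subadditive function on `Ps_B`, with constants `dF, rF` and error function `cF`.
`F` is defined on concrete patterns and is translation-invariant (i.e. well defined on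
pattern classes). -/
structure SubadditiveOn (Ps : Set (Set (Set (Pt d)))) (F : Set (Set (Pt d)) → ℝ)
    (dF rF : ℝ) (cF : ℝ → ℝ) : Prop where
  invariant : ∀ (t : Pt d), ∀ M ∈ BoxPatterns d Ps, F (patTrans d t M) = F M
  dF_nonneg : 0 ≤ dF
  rF_nonneg : 0 ≤ rF
  cF_anti : ∀ r s : ℝ, rF ≤ r → r ≤ s → cF s ≤ cF r
  cF_lim : Tendsto cF atTop (nhds 0)
  subadd : ∀ M ∈ BoxPatterns d Ps, ∀ (n : ℕ) (Bj : Fin n → Set (Pt d)),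
    (∀ j, IsBox d (Bj j)) →
    (∀ i j, i ≠ j → interior (Bj i) ∩ interior (Bj j) = ∅) →
    (⋃ j, Bj j) = supp d M →
    (∀ j, rF ≤ widthOf d (Bj j)) →
    F M ≤ (∑ j, F (patRestrict d M (Bj j))) +
      ∑ j, cF (widthOf d (Bj j)) * volOf d (Bj j)
  bound : ∀ M ∈ BoxPatterns d Ps, |F M| ≤ dF * patVol d M

/-- The upper mean `F⁺(r)`. -/
def Fplus (Ps : Set (Set (Set (Pt d)))) (F : Set (Set (Pt d)) → ℝ) (r : ℝ) : ℝ :=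
  sSup ((fun P => F P / patVol d P) '' RPatterns d Ps r)

/-- The lower mean `F⁻(r)`. -/
def Fminus (Ps : Set (Set (Set (Pt d)))) (F : Set (Set (Pt d)) → ℝ) (r : ℝ) : ℝ :=
  sInf ((fun P => F P / patVol d P) '' RPatterns d Ps r)


/-- The tiling space `Ω(𝒫)`: all tilings all of whose finite subpattern classes lie in `Ps`. -/
def TilingsOf (Ps : Set (Set (Set (Pt d)))) : Set (Set (Set (Pt d))) :=
  {T | IsTiling d T ∧ ∀ M : Set (Set (Pt d)), IsPattern d M → M ⊆ T → M ∈ Ps}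

/-- The metric `d(T,S)` on the tiling space. -/
def tdist (T S : Set (Set (Pt d))) : ℝ :=
  sInf {ε : ℝ | 0 < ε ∧ ∃ t : Pt d, ‖t‖ ≤ ε ∧
    patRestrict d T (Metric.closedBall (0 : Pt d) (1 / ε)) =
      patRestrict d (patTrans d t S) (Metric.closedBall (0 : Pt d) (1 / ε))}

/-- `Ω(Ps)` as a type. -/
def Omega (Ps : Set (Set (Set (Pt d)))) : Type :=
  {T : Set (Set (Pt d)) // T ∈ TilingsOf d Ps}

/-- The metric topology of `Ω(Ps)`, generated by the open balls of the metric `d`. -/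
def omegaTop (Ps : Set (Set (Set (Pt d)))) : TopologicalSpace (Omega d Ps) :=
  TopologicalSpace.generateFrom
    {U | ∃ (T₀ : Omega d Ps) (ε : ℝ), 0 < ε ∧ U = {S | tdist d T₀.1 S.1 < ε}}

/-- The translation action `t · T = T - t` on `Ω(Ps)`.  (For admissible `Ps` the translate
of a tiling in `Ω(Ps)` again lies in `Ω(Ps)`, so the `dite` below always takes its first
branch; phrasing it this way keeps the map total.) -/
def omegaTranslate (Ps : Set (Set (Set (Pt d)))) (t : Pt d) (S : Omega d Ps) :
    Omega d Ps :=
  haveI := Classical.propDecidable (patTrans d (-t) S.1 ∈ TilingsOf d Ps)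
  if h : patTrans d (-t) S.1 ∈ TilingsOf d Ps then ⟨patTrans d (-t) S.1, h⟩ else S

section AuxOne
variable {d}

lemma patTrans_zero (M : Set (Set (Pt d))) : patTrans d 0 M = M := by
  simp [patTrans]

lemma patTrans_patTrans (s t : Pt d) (M : Set (Set (Pt d))) :
    patTrans d s (patTrans d t M) = patTrans d (t + s) M := by
  simp only [patTrans, Set.image_image, add_assoc]

lemma patTrans_mono (t : Pt d) {M N : Set (Set (Pt d))} (h : M ⊆ N) :
    patTrans d t M ⊆ patTrans d t N := Set.image_mono h

lemma patTrans_subset_iff (t : Pt d) {M N : Set (Set (Pt d))} :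
    patTrans d t M ⊆ N ↔ M ⊆ patTrans d (-t) N := by
  constructor
  · intro h
    have := patTrans_mono (-t) h
    rwa [patTrans_patTrans, add_neg_cancel, patTrans_zero] at this
  · intro h
    have := patTrans_mono t h
    rwa [patTrans_patTrans, neg_add_cancel, patTrans_zero] at this

/-- tiles of `T` meeting the closed ball of radius `R` about the origin -/
def Loc (T : Set (Set (Pt d))) (R : ℝ) : Set (Set (Pt d)) :=
  {m | m ∈ T ∧ (m ∩ closedBall (0 : Pt d) R).Nonempty}

lemma Loc_subset (T : Set (Set (Pt d))) (R : ℝ) : Loc T R ⊆ T := fun _ h => h.1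

lemma Loc_mono (T : Set (Set (Pt d))) {R R' : ℝ} (h : R ≤ R') : Loc T R ⊆ Loc T R' :=
  fun _ hm => ⟨hm.1, hm.2.mono (Set.inter_subset_inter_right _ (closedBall_subset_closedBall h))⟩

lemma patTrans_Loc_subset (t : Pt d) (T : Set (Set (Pt d))) (R : ℝ) :
    patTrans d t (Loc T R) ⊆ Loc (patTrans d t T) (R + ‖t‖) := by
  rintro _ ⟨m, ⟨hm, x, hx, hxR⟩, rfl⟩
  refine ⟨⟨m, hm, rfl⟩, x + t, ⟨x, hx, rfl⟩, ?_⟩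
  rw [mem_closedBall_zero_iff] at *
  exact (norm_add_le _ _).trans (by linarith)

lemma Loc_patTrans_subset (t : Pt d) (T : Set (Set (Pt d))) (R : ℝ) :
    Loc (patTrans d t T) R ⊆ patTrans d t (Loc T (R + ‖t‖)) := by
  rintro _ ⟨⟨m, hm, rfl⟩, _, ⟨x, hx, rfl⟩, hxR⟩
  refine ⟨m, ⟨hm, x, hx, ?_⟩, rfl⟩
  rw [mem_closedBall_zero_iff] at *
  calc ‖x‖ = ‖(x + t) - t‖ := by simp
    _ ≤ ‖x + t‖ + ‖t‖ := norm_sub_le _ _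
    _ ≤ R + ‖t‖ := by simpa using hxR

/-- A compact nonempty set has no translational symmetries. -/
lemma compact_trans_inj {m : Set (Pt d)} (hc : IsCompact m) (hne : m.Nonempty) {v w : Pt d}
    (h : (fun x => x + v) '' m = (fun x => x + w) '' m) : v = w := by
  obtain ⟨p, hp, hmax⟩ := hc.exists_isMaxOn (f := fun x : Pt d => inner ℝ x (v - w)) hne
    (by fun_prop)
  have h1 : p + v ∈ (fun x => x + w) '' m := h ▸ ⟨p, hp, rfl⟩
  obtain ⟨q, hq, hqe⟩ := h1
  have hq' : q = p + (v - w) := by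
    have : q + w = p + v := hqe
    rw [← add_sub_assoc, ← this]; simp
  have h2 : inner ℝ q (v - w) ≤ inner ℝ p (v - w) := hmax hq
  rw [hq', inner_add_left, real_inner_self_eq_norm_sq] at h2
  have : ‖v - w‖ = 0 := by nlinarith [norm_nonneg (v - w)]
  exact sub_eq_zero.1 (norm_eq_zero.1 this)

/-- Small shifts of `L₀` into a finite `L` are trivial. -/
lemma small_shift {L₀ L : Set (Set (Pt d))} (hL : L.Finite) {m : Set (Pt d)} (hm : m ∈ L₀)
    (hc : IsCompact m) (hne : m.Nonempty) :
    ∃ δ > 0, ∀ v : Pt d, ‖v‖ < δ → patTrans d v L₀ ⊆ L → v = 0 := by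
  have hfin : {v : Pt d | patTrans d v L₀ ⊆ L}.Finite := by
    refine Set.Finite.of_finite_image (f := fun v => (fun x => x + v) '' m) (hL.subset ?_) ?_
    · rintro _ ⟨v, hv, rfl⟩
      exact hv ⟨m, hm, rfl⟩
    · intro v _ w _ h
      exact compact_trans_inj hc hne h
  have hcl : IsClosed ({v : Pt d | patTrans d v L₀ ⊆ L} \ {0}) := (hfin.sdiff).isClosed
  have : ({v : Pt d | patTrans d v L₀ ⊆ L} \ {0})ᶜ ∈ 𝓝 (0 : Pt d) :=
    hcl.isOpen_compl.mem_nhds (by simp)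
  obtain ⟨δ, hδ, hb⟩ := Metric.mem_nhds_iff.1 this
  refine ⟨δ, hδ, fun v hv hs => ?_⟩
  by_contra h0
  exact hb (mem_ball_zero_iff.2 hv) ⟨hs, h0⟩

lemma closedBall_rad_le [Nontrivial (Pt d)] {x y : Pt d} {r s : ℝ} (hr : 0 ≤ r)
    (h : closedBall x r ⊆ closedBall y s) : r ≤ s := by
  obtain ⟨e, he⟩ := exists_norm_eq (Pt d) hr
  have h1 : x + e ∈ closedBall y s := h (by simp [he])
  have h2 : x - e ∈ closedBall y s := h (by simp [he])
  have h3 := dist_triangle_right (x + e) (x - e) y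
  rw [mem_closedBall] at h1 h2
  have h4 : dist (x + e) (x - e) = 2 * r := by
    rw [dist_eq_norm, show x + e - (x - e) = (2 : ℝ) • e by rw [two_smul]; abel, norm_smul, he]
    simp
  linarith

/-- A finite union of closed sets which contains a nonempty open set: one has interior meeting it. -/
lemma exists_interior_of_finite_cover {F : Set (Set (Pt d))} (hF : F.Finite)
    (hcl : ∀ m ∈ F, IsClosed m) {U : Set (Pt d)} (hU : IsOpen U) (hne : U.Nonempty)
    (hcov : U ⊆ ⋃₀ F) : ∃ m ∈ F, (interior m ∩ U).Nonempty := by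
  induction F, hF using Set.Finite.induction_on generalizing U with
  | empty => simp at hcov; exact absurd hne (by simp [hcov])
  | @insert a F _ _ ih =>
    by_cases h : (U \ a).Nonempty
    · obtain ⟨m, hm, x, hx, hxU⟩ := ih (fun m hm => hcl m (Set.mem_insert_of_mem _ hm))
        (hU.sdiff (hcl a (Set.mem_insert _ _))) h (by
          rintro x ⟨hx, hxa⟩
          have := hcov hx
          rw [Set.sUnion_insert] at this
          exact this.resolve_left hxa)
      exact ⟨m, Set.mem_insert_of_mem _ hm, x, hx, hxU.1⟩
    · have hs : U ⊆ a := by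
        rw [Set.not_nonempty_iff_eq_empty, Set.sdiff_eq_empty] at h; exact h
      obtain ⟨x, hx⟩ := hne
      exact ⟨a, Set.mem_insert _ _, x, interior_maximal hs hU hx, hx⟩

/-- The geometric properties of the tiling space which we use. -/
structure Good (Om : Set (Set (Set (Pt d)))) (D C : ℝ) : Prop where
  D_pos : 0 < D
  C_pos : 0 < C
  nonempty : Om.Nonempty
  compact : ∀ T ∈ Om, ∀ m ∈ T, IsCompact m
  preconn : ∀ T ∈ Om, ∀ m ∈ T, IsPreconnected m
  intne : ∀ T ∈ Om, ∀ m ∈ T, (interior m).Nonempty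
  diam : ∀ T ∈ Om, ∀ m ∈ T, ∀ x ∈ m, ∀ y ∈ m, dist x y ≤ D
  disj : ∀ T ∈ Om, T.Pairwise fun m m' => interior m ∩ interior m' = ∅
  cover : ∀ T ∈ Om, ⋃₀ T = Set.univ
  fin : ∀ T ∈ Om, ∀ R, (Loc T R).Finite
  trans : ∀ T ∈ Om, ∀ t, patTrans d t T ∈ Om
  lr : ∀ R : ℝ, 1 ≤ R → ∀ T ∈ Om, ∀ S ∈ Om, ∃ t, ‖t‖ ≤ C * R ∧ patTrans d t (Loc T R) ⊆ S
  limit : ∀ L : ℕ → Set (Set (Pt d)), Monotone L → (∀ n, ∃ T ∈ Om, ∃ t, patTrans d t (L n) ⊆ T) →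
    (∀ n : ℕ, closedBall (0 : Pt d) n ⊆ ⋃₀ L n) → (⋃ n, L n) ∈ Om

section constructGood
variable {Ps : Set (Set (Set (Pt d)))}

lemma union_mem (hadm : Admissible d Ps) {L : ℕ → Set (Set (Pt d))} (hL : Monotone L)
    (h : ∀ n, ∀ M : Set (Set (Pt d)), M.Finite → M.Nonempty → M ⊆ L n → M ∈ Ps)
    (hcov : ∀ n : ℕ, closedBall (0 : Pt d) n ⊆ ⋃₀ L n) : (⋃ n, L n) ∈ TilingsOf d Ps := by
  have key : ∀ M : Set (Set (Pt d)), M.Finite → M.Nonempty → M ⊆ ⋃ n, L n → M ∈ Ps := by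
    intro M hf hn hM
    obtain ⟨n, hn'⟩ := Directed.exists_mem_subset_of_finset_subset_biUnion (f := L)
      (s := hf.toFinset) hL.directed_le (by simpa using hM)
    rw [hf.coe_toFinset] at hn'
    exact h n M hf hn hn'
  refine ⟨⟨?_, ?_, ?_⟩, ?_⟩
  · intro m hm
    exact (hadm.pattern _ (key {m} (Set.finite_singleton m) (Set.singleton_nonempty m)
      (Set.singleton_subset_iff.2 hm))).2.2.1 m rfl
  · intro m hm m' hm' hne
    exact (hadm.pattern _ (key {m, m'} (Set.toFinite _) (Set.insert_nonempty _ _)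
      (Set.insert_subset hm (Set.singleton_subset_iff.2 hm')))).2.2.2 (by simp) (by simp) hne
  · rw [Set.eq_univ_iff_forall]
    intro x
    obtain ⟨n, hn⟩ := exists_nat_ge ‖x‖
    obtain ⟨m, hm, hx⟩ := hcov n (mem_closedBall_zero_iff.2 hn)
    exact ⟨m, Set.mem_iUnion.2 ⟨n, hm⟩, hx⟩
  · intro M hM hs
    exact key M hM.1 hM.2.1 hs


lemma tile_compact {m : Set (Pt d)} (h : IsTile d m) : IsCompact m := by
  obtain ⟨e⟩ := h
  have : CompactSpace (closedBall (0 : Pt d) 1) :=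
    isCompact_iff_compactSpace.1 (isCompact_closedBall _ _)
  exact isCompact_iff_compactSpace.2 e.symm.compactSpace

lemma tile_preconn {m : Set (Pt d)} (h : IsTile d m) : IsPreconnected m := by
  obtain ⟨e⟩ := h
  have h1 : IsPreconnected (closedBall (0 : Pt d) 1) := (convex_closedBall _ _).isPreconnected
  rw [isPreconnected_iff_preconnectedSpace] at h1 ⊢
  exact e.symm.surjective.denseRange.preconnectedSpace e.symm.continuous

lemma tile_nonempty {m : Set (Pt d)} (h : IsTile d m) : m.Nonempty := by
  obtain ⟨e⟩ := h
  exact ⟨_, (e.symm ⟨0, by simp⟩).2⟩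

lemma pattern_of_subset {T M : Set (Set (Pt d))} (hT : T ∈ TilingsOf d Ps) (hM : M.Finite)
    (hne : M.Nonempty) (hs : M ⊆ T) : M ∈ Ps :=
  hT.2 M ⟨hM, hne, fun m hm => hT.1.1 m (hs hm), hT.1.2.1.mono hs⟩ hs

lemma patTrans_fin {M : Set (Set (Pt d))} (t : Pt d) (hM : M.Finite) : (patTrans d t M).Finite :=
  hM.image _

lemma limit_mem (hadm : Admissible d Ps) (L : ℕ → Set (Set (Pt d))) (hL : Monotone L)
    (h : ∀ n, ∃ T ∈ TilingsOf d Ps, ∃ t, patTrans d t (L n) ⊆ T)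
    (hcov : ∀ n : ℕ, closedBall (0 : Pt d) n ⊆ ⋃₀ L n) : (⋃ n, L n) ∈ TilingsOf d Ps := by
  refine union_mem hadm hL (fun n M hf hne hM => ?_) hcov
  obtain ⟨T, hT, t, ht⟩ := h n
  have h1 := pattern_of_subset hT (patTrans_fin t hf) (hne.image _) ((patTrans_mono t hM).trans ht)
  have := hadm.transClosed (-t) _ h1
  rwa [patTrans_patTrans, add_neg_cancel, patTrans_zero] at this

lemma cover_patTrans {T : Set (Set (Pt d))} (hT : ⋃₀ T = Set.univ) (t : Pt d) :
    ⋃₀ (patTrans d t T) = Set.univ := by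
  rw [Set.eq_univ_iff_forall] at *
  intro x
  obtain ⟨m, hm, hx⟩ := hT (x - t)
  exact ⟨_, ⟨m, hm, rfl⟩, x - t, hx, by simp⟩

lemma trans_mem (hadm : Admissible d Ps) {T : Set (Set (Pt d))} (hT : T ∈ TilingsOf d Ps)
    (t : Pt d) : patTrans d t T ∈ TilingsOf d Ps := by
  have := limit_mem hadm (fun _ => patTrans d t T) monotone_const
    (fun _ => ⟨T, hT, -t, by rw [patTrans_patTrans, add_neg_cancel, patTrans_zero]⟩)
    (fun _ => by rw [cover_patTrans hT.1.2.2]; exact Set.subset_univ _)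
  rwa [Set.iUnion_const] at this

lemma singleton_mem (hadm : Admissible d Ps) {P : Set (Set (Pt d))} (hP : P ∈ Ps) {m : Set (Pt d)}
    (hm : m ∈ P) : {m} ∈ Ps :=
  hadm.subClosed P hP {m} ⟨Set.finite_singleton _, Set.singleton_nonempty _,
    by rintro _ rfl; exact (hadm.pattern P hP).2.2.1 _ hm, Set.pairwise_singleton _ _⟩
    (Set.singleton_subset_iff.2 hm)

lemma tilings_nonempty (hne : Ps.Nonempty) (hadm : Admissible d Ps) :
    (TilingsOf d Ps).Nonempty := by
  obtain ⟨P, hP⟩ := hne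
  obtain ⟨m, hm⟩ := (hadm.pattern P hP).2.1
  obtain ⟨p, hp⟩ := tile_nonempty ((hadm.pattern P hP).2.2.1 m hm)
  have hex : ∀ (Q : {Q : Set (Set (Pt d)) // Q ∈ Ps ∧ (0 : Pt d) ∈ supp d Q}) (n : ℕ),
      ∃ Q' : {Q : Set (Set (Pt d)) // Q ∈ Ps ∧ (0 : Pt d) ∈ supp d Q},
        Q.1 ⊆ Q'.1 ∧ closedBall (0 : Pt d) (n + 1) ⊆ supp d Q'.1 := by
    intro Q n
    obtain ⟨Q', h1, h2, h3⟩ := hadm.extend Q.1 Q.2.1 Q.2.2 (n + 1) (by positivity)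
    exact ⟨⟨Q', h1, h3 (by simp; positivity)⟩, h2, h3⟩
  choose f hf1 hf2 using hex
  let Q0 : {Q : Set (Set (Pt d)) // Q ∈ Ps ∧ (0 : Pt d) ∈ supp d Q} :=
    ⟨patTrans d (-p) P, hadm.transClosed _ _ hP, _, ⟨m, hm, rfl⟩, p, hp, by simp⟩
  let s : ℕ → {Q : Set (Set (Pt d)) // Q ∈ Ps ∧ (0 : Pt d) ∈ supp d Q} :=
    fun n => Nat.rec Q0 (fun n Q => f Q n) n
  refine ⟨_, union_mem hadm (L := fun n => (s (n + 1)).1) ?_ ?_ ?_⟩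
  · exact monotone_nat_of_le_succ fun n => hf1 (s (n + 1)) (n + 1)
  · intro n M hf hn hM
    have hp := hadm.pattern _ (s (n + 1)).2.1
    exact hadm.subClosed _ (s (n + 1)).2.1 M
      ⟨hf, hn, fun m hm => hp.2.2.1 m (hM hm), hp.2.2.2.mono hM⟩ hM
  · intro n
    exact (closedBall_subset_closedBall (by linarith)).trans (hf2 (s n) n)

lemma nontrivial_of (hne : Ps.Nonempty) (hadm : Admissible d Ps) : Nontrivial (Pt d) := by
  rcases Nat.eq_zero_or_pos d with h0 | h0
  · exfalso
    subst h0
    obtain ⟨P, hP⟩ := hne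
    obtain ⟨m, hm⟩ := (hadm.pattern P hP).2.1
    obtain ⟨rmin, rmax, h1, -, h2⟩ := hadm.tileBounds
    have h3 := (h2 m (singleton_mem hadm hP hm)).1
    have h4 : rIn 0 {m} = 0 := by
      obtain ⟨p, hp⟩ := tile_nonempty ((hadm.pattern P hP).2.2.1 m hm)
      have : {r : ℝ | ∃ x : Pt 0, closedBall x r ⊆ supp 0 {m}} = Set.univ := by
        rw [Set.eq_univ_iff_forall]
        refine fun r => ⟨0, fun x _ => ?_⟩
        rw [Subsingleton.elim x p]
        simpa [supp] using hp
      rw [rIn, this, Real.sSup_univ]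
    linarith
  · have : Nonempty (Fin d) := ⟨⟨0, h0⟩⟩
    infer_instance

lemma Loc_supp_subset {T : Set (Set (Pt d))} {D R : ℝ}
    (hD : ∀ m ∈ T, ∀ x ∈ m, ∀ y ∈ m, dist x y ≤ D) : supp d (Loc T R) ⊆ closedBall 0 (R + D) := by
  rintro x ⟨m, ⟨hm, y, hy, hyR⟩, hx⟩
  have := hD m hm x hx y hy
  have h2 := dist_triangle x y 0
  rw [mem_closedBall] at *
  linarith

lemma ball_subset_supp_Loc {T : Set (Set (Pt d))} (hT : ⋃₀ T = Set.univ) (R : ℝ) :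
    closedBall 0 R ⊆ supp d (Loc T R) := by
  intro x hx
  obtain ⟨m, hm, hxm⟩ : x ∈ ⋃₀ T := hT ▸ Set.mem_univ x
  exact ⟨m, ⟨hm, x, hxm, hx⟩, hxm⟩

theorem exists_good (hne : Ps.Nonempty) (hadm : Admissible d Ps) (hlr : LinearlyRepetitive d Ps) :
    ∃ D C : ℝ, Good (TilingsOf d Ps) D C := by
  have hnt := nontrivial_of hne hadm
  obtain ⟨rmin, rmax, hmin, hmm, hb⟩ := hadm.tileBounds
  obtain ⟨c, hc, hlr⟩ := hlr
  have hsing : ∀ T ∈ TilingsOf d Ps, ∀ m ∈ T, {m} ∈ Ps := fun T hT m hm =>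
    pattern_of_subset hT (Set.finite_singleton m) (Set.singleton_nonempty m)
      (Set.singleton_subset_iff.2 hm)
  have hDiam : ∀ T ∈ TilingsOf d Ps, ∀ m ∈ T, ∀ x ∈ m, ∀ y ∈ m, dist x y ≤ 2 * (rmax + 1) := by
    intro T hT m hm x hx y hy
    have h1 := (hb m (hsing T hT m hm)).2.2
    have h2 : {r : ℝ | ∃ x : Pt d, supp d {m} ⊆ closedBall x r}.Nonempty := by
      obtain ⟨r, hr⟩ := (tile_compact (hT.1.1 m hm)).isBounded.subset_closedBall 0
      exact ⟨r, 0, by simpa [supp] using hr⟩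
    obtain ⟨r, ⟨z, hz⟩, hr⟩ := exists_lt_of_csInf_lt h2 (lt_of_le_of_lt h1 (lt_add_one rmax))
    simp only [supp, Set.sUnion_singleton] at hz
    have h3 := hz hx
    have h4 := hz hy
    rw [mem_closedBall] at h3 h4
    linarith [dist_triangle_right x y z]
  have hball : ∀ T ∈ TilingsOf d Ps, ∀ m ∈ T, ∃ x, ball x (rmin / 2) ⊆ interior m := by
    intro T hT m hm
    have h1 := (hb m (hsing T hT m hm)).1
    have h2 : {r : ℝ | ∃ x : Pt d, closedBall x r ⊆ supp d {m}}.Nonempty :=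
      ⟨-1, 0, by rw [closedBall_eq_empty.2 (by norm_num)]; exact Set.empty_subset _⟩
    obtain ⟨r, ⟨x, hx⟩, hr⟩ := exists_lt_of_lt_csSup h2
      (lt_of_lt_of_le (show rmin / 2 < rmin by linarith) h1)
    simp only [supp, Set.sUnion_singleton] at hx
    exact ⟨x, interior_maximal ((ball_subset_closedBall.trans
      (closedBall_subset_closedBall hr.le)).trans hx) isOpen_ball⟩
  have hfin : ∀ T ∈ TilingsOf d Ps, ∀ R, (Loc T R).Finite := by
    intro T hT R
    have hbd : Bornology.IsBounded (⋃ i : Loc T R, interior (i : Set (Pt d))) := by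
      refine (Metric.isBounded_closedBall (x := (0 : Pt d)) (r := R + 2 * (rmax + 1))).subset ?_
      refine Set.iUnion_subset fun i => interior_subset.trans ?_
      exact (Set.subset_sUnion_of_mem i.2).trans (Loc_supp_subset (hDiam T hT))
    have := Measure.finite_const_le_meas_of_disjoint_iUnion (volume : Measure (Pt d))
      (ε := volume (ball (0 : Pt d) (rmin / 2)))
      (Metric.measure_ball_pos _ _ (by linarith)) (As := fun i : Loc T R => interior (i : Set (Pt d)))
      (fun i => isOpen_interior.measurableSet)
      (fun i j hij => Set.disjoint_iff_inter_eq_empty.2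
        (hT.1.2.1 i.2.1 j.2.1 (fun h => hij (Subtype.ext h)))) hbd.measure_lt_top.ne
    have huniv : {i : Loc T R | volume (ball (0 : Pt d) (rmin / 2)) ≤
        volume (interior (i : Set (Pt d)))} = Set.univ := by
      rw [Set.eq_univ_iff_forall]
      intro i
      obtain ⟨x, hx⟩ := hball T hT i i.2.1
      rw [Set.mem_ofPred_eq]
      rw [← Measure.addHaar_ball_center volume x]
      exact measure_mono hx
    rw [huniv] at this
    exact Set.finite_coe_iff.1 (Set.finite_univ_iff.1 this)
  refine ⟨2 * (rmax + 1), c * (1 + 2 * (rmax + 1)) + 2 * (rmax + 1), ?_⟩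
  have hDpos : 0 < 2 * (rmax + 1) := by linarith
  refine ⟨hDpos, by positivity, tilings_nonempty hne hadm, fun T hT m hm => tile_compact (hT.1.1 m hm),
    fun T hT m hm => tile_preconn (hT.1.1 m hm), ?_, hDiam, fun T hT => hT.1.2.1,
    fun T hT => hT.1.2.2, hfin, fun T hT t => trans_mem hadm hT t, ?_, limit_mem hadm⟩
  · intro T hT m hm
    obtain ⟨x, hx⟩ := hball T hT m hm
    exact ⟨x, hx (mem_ball_self (by linarith))⟩
  · intro R hR T hT S hS
    set D := 2 * (rmax + 1) with hDdef
    have hLne : ∀ T ∈ TilingsOf d Ps, ∀ R : ℝ, 0 ≤ R → ∃ m ∈ Loc T R, (0 : Pt d) ∈ m := by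
      intro T hT R hR
      exact ball_subset_supp_Loc hT.1.2.2 R (mem_closedBall_self hR)
    have hmem : ∀ T ∈ TilingsOf d Ps, ∀ R : ℝ, 0 ≤ R → Loc T R ∈ Ps := by
      intro T hT R hR
      obtain ⟨m, hm, -⟩ := hLne T hT R hR
      exact pattern_of_subset hT (hfin T hT R) ⟨m, hm⟩ (Loc_subset T R)
    have hlow : ∀ r ∈ {r : ℝ | ∃ x : Pt d, supp d (Loc T R) ⊆ closedBall x r}, R ≤ r := by
      rintro r ⟨x, hx⟩
      exact closedBall_rad_le (by linarith) ((ball_subset_supp_Loc hT.1.2.2 R).trans hx)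
    have hmemD : R + D ∈ {r : ℝ | ∃ x : Pt d, supp d (Loc T R) ⊆ closedBall x r} :=
      ⟨0, Loc_supp_subset (hDiam T hT)⟩
    have h1 : 1 ≤ rOut d (Loc T R) := hR.trans (le_csInf ⟨_, hmemD⟩ hlow)
    have h2 : rOut d (Loc T R) ≤ R + D := csInf_le ⟨R, hlow⟩ hmemD
    have hR' : 0 ≤ c * (R + D) := by positivity
    have h3 : c * (R + D) ≤ rIn d (Loc S (c * (R + D))) := by
      refine le_csSup ⟨c * (R + D) + D, ?_⟩ ⟨0, ball_subset_supp_Loc hS.1.2.2 _⟩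
      rintro r ⟨x, hx⟩
      rcases le_or_gt 0 r with h | h
      · exact closedBall_rad_le h (hx.trans (Loc_supp_subset (hDiam S hS)))
      · linarith
    obtain ⟨t, ht⟩ := hlr _ (hmem T hT R (by linarith)) h1 _ (hmem S hS _ hR')
      ((mul_le_mul_of_nonneg_left h2 hc.le).trans h3)
    refine ⟨t, ?_, ht.trans (Loc_subset _ _)⟩
    obtain ⟨m, hm, h0⟩ := hLne T hT R (by linarith)
    have h5 : t ∈ supp d (Loc S (c * (R + D))) := ⟨_, ht ⟨m, hm, rfl⟩, 0, h0, by simp⟩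
    have h6 := Loc_supp_subset (hDiam S hS) h5
    rw [mem_closedBall_zero_iff] at h6
    nlinarith [mul_nonneg hc.le hDpos.le]

end constructGood
end AuxOne
section AuxTwo
variable {d}

namespace Good
variable {Om : Set (Set (Set (Pt d)))} {D C : ℝ}

lemma mem_ball_of_Loc (h : Good Om D C) {T : Set (Set (Pt d))} (hT : T ∈ Om) {R : ℝ}
    {m : Set (Pt d)} (hm : m ∈ Loc T R) : m ⊆ closedBall 0 (R + D) :=
  (Set.subset_sUnion_of_mem hm).trans (Loc_supp_subset (h.diam T hT))

lemma tile_ne (h : Good Om D C) {T : Set (Set (Pt d))} (hT : T ∈ Om) {m : Set (Pt d)}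
    (hm : m ∈ T) : m.Nonempty := (h.intne T hT m hm).mono interior_subset

lemma agree (h : Good Om D C) {T S : Set (Set (Pt d))} (hT : T ∈ Om) (hS : S ∈ Om) {R : ℝ}
    (hs : Loc T (R + D) ⊆ S) : Loc S R ⊆ T := by
  intro m hm
  obtain ⟨m', hm', hne⟩ := exists_interior_of_finite_cover (h.fin T hT (R + D))
    (fun m' hm' => (h.compact T hT m' hm'.1).isClosed) isOpen_interior (h.intne S hS m hm.1)
    ((interior_subset.trans (h.mem_ball_of_Loc hS hm)).trans (ball_subset_supp_Loc (h.cover T hT) _))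
  have : m' = m := by
    by_contra hne'
    rw [h.disj S hS (hs hm') hm.1 hne'] at hne
    simp at hne
  exact this ▸ hm'.1

lemma restrict_eq (h : Good Om D C) {T S : Set (Set (Pt d))} (hT : T ∈ Om) (hS : S ∈ Om) {R : ℝ}
    (hs : Loc T (R + D) ⊆ S) :
    patRestrict d T (closedBall 0 R) = patRestrict d S (closedBall 0 R) := by
  have h2 := h.agree hT hS hs
  have h1 := (Loc_mono T (le_add_of_nonneg_right h.D_pos.le)).trans hs
  ext s
  constructor
  · rintro ⟨m, hm, hne, rfl⟩
    exact ⟨m, h1 ⟨hm, hne.mono (Set.inter_subset_inter_right _ interior_subset)⟩, hne, rfl⟩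
  · rintro ⟨m, hm, hne, rfl⟩
    exact ⟨m, h2 ⟨hm, hne.mono (Set.inter_subset_inter_right _ interior_subset)⟩, hne, rfl⟩

lemma loc_of_restrict (h : Good Om D C) {T S : Set (Set (Pt d))} (hT : T ∈ Om) (hS : S ∈ Om)
    {R r : ℝ} (hr : R + D < r)
    (he : patRestrict d T (closedBall 0 r) = patRestrict d S (closedBall 0 r)) :
    Loc T R ⊆ S := by
  intro m hm
  have hmb : m ⊆ ball 0 r :=
    (h.mem_ball_of_Loc hT hm).trans (closedBall_subset_ball hr)
  have hmc : m ∩ closedBall 0 r = m := Set.inter_eq_left.2 (hmb.trans ball_subset_closedBall)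
  obtain ⟨p, hp⟩ := h.tile_ne hT hm.1
  have h1 : m ∈ patRestrict d T (closedBall 0 r) :=
    ⟨m, hm.1, ⟨p, hp, ball_subset_interior_closedBall (hmb hp)⟩, hmc.symm⟩
  rw [he] at h1
  obtain ⟨m', hm', -, hme⟩ := h1
  have hsub : m' ⊆ ball 0 r := by
    refine (h.preconn S hS m' hm').subset_left_of_subset_union isOpen_ball
      isClosed_closedBall.isOpen_compl (v := (closedBall (0 : Pt d) r)ᶜ) ?_ ?_ ?_
    · exact Set.disjoint_compl_right_iff_subset.2 ball_subset_closedBall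
    · intro x hx
      by_cases hxr : x ∈ closedBall 0 r
      · left
        exact hmb (hme ▸ ⟨hx, hxr⟩)
      · right; exact hxr
    · have : p ∈ m' ∩ closedBall 0 r := hme ▸ hp
      exact ⟨p, this.1, hmb hp⟩
  rw [hme, Set.inter_eq_left.2 (hsub.trans ball_subset_closedBall)]
  exact hm'

lemma fin_subset_Loc (h : Good Om D C) {T : Set (Set (Pt d))} (hT : T ∈ Om) {F : Set (Set (Pt d))}
    (hF : F.Finite) (hs : F ⊆ T) : ∃ R : ℝ, F ⊆ Loc T R := by
  obtain ⟨n, hn⟩ := Directed.exists_mem_subset_of_finset_subset_biUnion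
    (f := fun n : ℕ => Loc T n) (s := hF.toFinset)
    (Monotone.directed_le fun n k hnk => Loc_mono T (by exact_mod_cast hnk)) (by
      intro m hm
      rw [hF.coe_toFinset] at hm
      obtain ⟨p, hp⟩ := h.tile_ne hT (hs hm)
      obtain ⟨n, hn⟩ := exists_nat_ge ‖p‖
      exact Set.mem_iUnion.2 ⟨n, hs hm, p, hp, mem_closedBall_zero_iff.2 hn⟩)
  rw [hF.coe_toFinset] at hn
  exact ⟨n, hn⟩

end Good

lemma restrict_mono {T S : Set (Set (Pt d))} {r r' : ℝ} (hr : r' ≤ r)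
    (he : patRestrict d T (closedBall 0 r) = patRestrict d S (closedBall 0 r)) :
    patRestrict d T (closedBall 0 r') = patRestrict d S (closedBall 0 r') := by
  have hcb : closedBall (0 : Pt d) r' ⊆ closedBall 0 r := closedBall_subset_closedBall hr
  have key : ∀ T S : Set (Set (Pt d)),
      patRestrict d T (closedBall 0 r) = patRestrict d S (closedBall 0 r) →
      patRestrict d T (closedBall 0 r') ⊆ patRestrict d S (closedBall 0 r') := by
    rintro T S he s ⟨m, hm, ⟨p, hpm, hp⟩, rfl⟩
    have h1 : m ∩ closedBall 0 r ∈ patRestrict d T (closedBall 0 r) :=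
      ⟨m, hm, ⟨p, hpm, interior_mono hcb hp⟩, rfl⟩
    rw [he] at h1
    obtain ⟨m', hm', -, hme⟩ := h1
    have h2 : m ∩ closedBall 0 r' = m' ∩ closedBall 0 r' := by
      rw [← Set.inter_eq_right.2 hcb, ← Set.inter_assoc, ← Set.inter_assoc, hme]
    have h3 : p ∈ m' ∩ closedBall 0 r' := h2 ▸ ⟨hpm, interior_subset hp⟩
    exact ⟨m', hm', ⟨p, h3.1, hp⟩, h2⟩
  exact Set.Subset.antisymm (key T S he) (key S T he.symm)

section topo
variable {Ps : Set (Set (Set (Pt d)))} {D C : ℝ}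

lemma tdist_lt_iff (h : Good (TilingsOf d Ps) D C) {T S : Set (Set (Pt d))}
    (hT : T ∈ TilingsOf d Ps) (hS : S ∈ TilingsOf d Ps) {ε : ℝ} :
    tdist d T S < ε ↔ ∃ ε', (0 < ε' ∧ ∃ t : Pt d, ‖t‖ ≤ ε' ∧
      patRestrict d T (closedBall 0 (1 / ε')) = patRestrict d (patTrans d t S)
        (closedBall 0 (1 / ε'))) ∧ ε' < ε := by
  refine csInf_lt_iff ⟨0, fun r hr => hr.1.le⟩ ?_
  obtain ⟨t, -, ht⟩ := h.lr (1 + D) (by linarith [h.D_pos]) T hT S hS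
  refine ⟨max 1 ‖t‖, by positivity, -t, by rw [norm_neg]; exact le_max_right _ _, ?_⟩
  refine restrict_mono (r := 1) ?_ ?_
  · rw [div_le_one (by positivity)]; exact le_max_left _ _
  · exact h.restrict_eq hT (h.trans S hS _) ((patTrans_subset_iff t).1 ht)

/-- Basic neighbourhoods. -/
def Nb (T : Omega d Ps) (R δ : ℝ) : Set (Omega d Ps) :=
  {S | ∃ u : Pt d, ‖u‖ < δ ∧ patTrans d u (Loc T.1 R) ⊆ S.1}

lemma Nb_mono (T : Omega d Ps) {R δ R' δ' : ℝ} (hR : R ≤ R') (hδ : δ' ≤ δ) :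
    Nb T R' δ' ⊆ Nb T R δ := by
  rintro S ⟨u, hu, hs⟩
  exact ⟨u, hu.trans_le hδ, (patTrans_mono u (Loc_mono T.1 hR)).trans hs⟩

lemma subbasic (h : Good (TilingsOf d Ps) D C) {T₀ T : Omega d Ps} {ε : ℝ}
    (hlt : tdist d T₀.1 T.1 < ε) :
    ∃ R δ : ℝ, 0 < δ ∧ Nb T R δ ⊆ {S | tdist d T₀.1 S.1 < ε} := by
  rw [tdist_lt_iff h T₀.2 T.2] at hlt
  obtain ⟨ε', ⟨h0, t, ht, he⟩, hε⟩ := hlt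
  refine ⟨1 / ε' + D + ‖t‖, (ε - ε') / 2, by linarith, ?_⟩
  rintro S ⟨u, hu, hs⟩
  rw [Set.mem_ofPred_eq, tdist_lt_iff h T₀.2 S.2]
  have hnn := norm_nonneg u
  refine ⟨ε' + ‖u‖, ⟨by positivity, t - u, (norm_sub_le _ _).trans (by linarith), ?_⟩, by linarith⟩
  refine restrict_mono (r := 1 / ε') ?_ ?_
  · exact one_div_le_one_div_of_le h0 (by linarith)
  · rw [he]
    refine h.restrict_eq (h.trans _ T.2 _) (h.trans _ S.2 _) ?_
    refine (Loc_patTrans_subset t T.1 _).trans ?_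
    rw [patTrans_subset_iff, patTrans_patTrans]
    rw [patTrans_subset_iff] at hs
    convert hs using 2
    abel

attribute [local instance] omegaTop

lemma mem_nhds_iff_Nb (h : Good (TilingsOf d Ps) D C) {T : Omega d Ps} {s : Set (Omega d Ps)} :
    s ∈ 𝓝 T ↔ ∃ R δ : ℝ, 0 < δ ∧ Nb T R δ ⊆ s := by
  constructor
  · intro hs
    obtain ⟨U, hUs, hU, hTU⟩ := mem_nhds_iff.1 hs
    suffices h' : ∀ T ∈ U, ∃ R δ : ℝ, 0 < δ ∧ Nb T R δ ⊆ U by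
      obtain ⟨R, δ, hδ, hn⟩ := h' T hTU
      exact ⟨R, δ, hδ, hn.trans hUs⟩
    clear hTU hUs
    have hU' : TopologicalSpace.GenerateOpen {U : Set (Omega d Ps) | ∃ (T₀ : Omega d Ps) (ε : ℝ),
      0 < ε ∧ U = {S | tdist d T₀.1 S.1 < ε}} U := hU
    clear hU
    induction hU' with
    | basic U hU =>
      obtain ⟨T₀, ε, hε, rfl⟩ := hU
      intro T hT
      exact subbasic h hT
    | univ => exact fun T _ => ⟨0, 1, one_pos, Set.subset_univ _⟩
    | inter U V _ _ h1 h2 =>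
      rintro T ⟨hT1, hT2⟩
      obtain ⟨R, δ, hδ, hn⟩ := h1 T hT1
      obtain ⟨R', δ', hδ', hn'⟩ := h2 T hT2
      exact ⟨max R R', min δ δ', lt_min hδ hδ', Set.subset_inter
        ((Nb_mono T (le_max_left _ _) (min_le_left _ _)).trans hn)
        ((Nb_mono T (le_max_right _ _) (min_le_right _ _)).trans hn')⟩
    | sUnion 𝒮 _ ih =>
      rintro T ⟨U, hU, hT⟩
      obtain ⟨R, δ, hδ, hn⟩ := ih U hU T hT
      exact ⟨R, δ, hδ, hn.trans (Set.subset_sUnion_of_mem hU)⟩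
  · rintro ⟨R, δ, hδ, hn⟩
    refine mem_of_superset ?_ hn
    have hpos : 0 < |R| + D + 1 := by have := abs_nonneg R; have := h.D_pos; positivity
    have hε : 0 < min δ (1 / (|R| + D + 1)) := lt_min hδ (by positivity)
    have hopen : IsOpen {S : Omega d Ps | tdist d T.1 S.1 < min δ (1 / (|R| + D + 1))} :=
      TopologicalSpace.isOpen_generateFrom_of_mem ⟨T, _, hε, rfl⟩
    refine mem_of_superset (hopen.mem_nhds ?_) ?_
    · rw [Set.mem_ofPred_eq, tdist_lt_iff h T.2 T.2]
      exact ⟨_, ⟨half_pos hε, 0, by rw [norm_zero]; exact (half_pos hε).le,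
        by rw [patTrans_zero]⟩, half_lt_self hε⟩
    · intro S hS
      rw [Set.mem_ofPred_eq, tdist_lt_iff h T.2 S.2] at hS
      obtain ⟨ε', ⟨h0, t, ht, he⟩, hlt⟩ := hS
      refine ⟨-t, by rw [norm_neg]; exact ht.trans_lt (hlt.trans_le (min_le_left _ _)), ?_⟩
      rw [patTrans_subset_iff, neg_neg]
      refine h.loc_of_restrict T.2 (h.trans _ S.2 _) ?_ he
      have h1 : ε' < 1 / (|R| + D + 1) := hlt.trans_le (min_le_right _ _)
      have h2 : |R| + D + 1 < 1 / ε' := by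
        rw [lt_one_div hpos h0]; exact h1
      linarith [le_abs_self R]

/-- Sets of tilings containing a copy of `P` shifted by a vector in `V`. -/
def Cyl (P : Set (Set (Pt d))) (V : Set (Pt d)) : Set (Omega d Ps) :=
  {S | ∃ u ∈ V, patTrans d u P ⊆ S.1}

lemma Cyl_open (h : Good (TilingsOf d Ps) D C) {P : Set (Set (Pt d))} (hP : P.Finite)
    {V : Set (Pt d)} (hV : IsOpen V) : IsOpen (Cyl P V : Set (Omega d Ps)) := by
  rw [isOpen_iff_mem_nhds]
  rintro S ⟨u, hu, hs⟩
  rw [mem_nhds_iff_Nb h]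
  obtain ⟨R, hR⟩ := h.fin_subset_Loc S.2 (hP.image _) hs
  obtain ⟨δ, hδ, hb⟩ := Metric.isOpen_iff.1 hV u hu
  refine ⟨R, δ, hδ, ?_⟩
  rintro S' ⟨v, hv, hs'⟩
  refine ⟨u + v, hb (by simpa [mem_ball_iff_norm] using hv), ?_⟩
  rw [← patTrans_patTrans]
  exact (patTrans_mono v hR).trans hs'

lemma omega_t2 (h : Good (TilingsOf d Ps) D C) : T2Space (Omega d Ps) := by
  have key : ∀ T S : Omega d Ps, (𝓝 T ⊓ 𝓝 S).NeBot → T.1 ⊆ S.1 := by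
    intro T S hne m hm
    obtain ⟨R, hR⟩ := h.fin_subset_Loc T.2 (Set.finite_singleton m) (Set.singleton_subset_iff.2 hm)
    have hmR : m ∈ Loc T.1 R := hR rfl
    obtain ⟨δ₀, hδ₀, hsm⟩ := small_shift (L₀ := Loc T.1 R) (h.fin S.1 S.2 (R + 2)) hmR
      (h.compact _ T.2 m hm) (h.tile_ne T.2 hm)
    have hδ : 0 < min 1 (δ₀ / 2) := by positivity
    obtain ⟨U, ⟨u, hu, hs⟩, u', hu', hs'⟩ := hne.nonempty_of_mem
      (inter_mem_inf ((mem_nhds_iff_Nb h).2 ⟨R, _, hδ, Subset.rfl⟩)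
        ((mem_nhds_iff_Nb h).2 ⟨R + 2 + D, _, hδ, Subset.rfl⟩))
    have hUm := h.trans U.1 U.2 (-u')
    have h1 : Loc (patTrans d (-u') U.1) (R + 2) ⊆ S.1 :=
      h.agree S.2 hUm ((patTrans_subset_iff u').1 hs')
    have hn : ‖u - u'‖ < min 2 δ₀ := by
      have a1 := hu.trans_le (min_le_left _ _)
      have a2 := hu.trans_le (min_le_right _ _)
      have b1 := hu'.trans_le (min_le_left _ _)
      have b2 := hu'.trans_le (min_le_right _ _)
      exact (norm_sub_le u u').trans_lt (lt_min (by linarith) (by linarith))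
    have h2 : patTrans d (u - u') (Loc T.1 R) ⊆ patTrans d (-u') U.1 := by
      rw [sub_eq_add_neg, ← patTrans_patTrans]
      exact patTrans_mono _ hs
    have h3 : patTrans d (u - u') (Loc T.1 R) ⊆ Loc S.1 (R + 2) := by
      intro m' hm'
      have h4 := patTrans_Loc_subset (u - u') T.1 R hm'
      have h5 : (m' ∩ closedBall 0 (R + 2)).Nonempty := h4.2.mono
        (Set.inter_subset_inter_right _ (closedBall_subset_closedBall
          (by linarith [hn.trans_le (min_le_left _ _)])))
      exact ⟨h1 ⟨h2 hm', h5⟩, h5⟩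
    have h6 := hsm _ (hn.trans_le (min_le_right _ _)) h3
    rw [h6, patTrans_zero] at h3
    exact (h3 hmR).1
  refine t2_iff_nhds.2 fun {T S} hne => Subtype.ext (Set.Subset.antisymm (key T S hne) (key S T ?_))
  rwa [inf_comm]

end topo
end AuxTwo
section AuxThree
variable {d}
variable {Ps : Set (Set (Set (Pt d)))} {D C : ℝ}

attribute [local instance] omegaTop

lemma compact_step (h : Good (TilingsOf d Ps) D C) (f : Ultrafilter (Omega d Ps)) (R : ℝ)
    (hR : 1 ≤ R) : ∃ L : Set (Set (Pt d)), ∀ δ > 0, ∀ᶠ T in (f : Filter (Omega d Ps)),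
      ∃ u : Pt d, ‖u‖ < δ ∧ Loc T.1 R = patTrans d u L := by
  obtain ⟨T₁, hT₁⟩ := h.nonempty
  have hex : ∀ T : Omega d Ps, ∃ s : Pt d, ‖s‖ ≤ C * R ∧ patTrans d s (Loc T.1 R) ⊆ T₁ :=
    fun T => h.lr R hR T.1 T.2 T₁ hT₁
  choose s hs1 hs2 using hex
  have hsub : ∀ T : Omega d Ps, patTrans d (s T) (Loc T.1 R) ∈ 𝒫 (Loc T₁ (R + C * R)) := by
    intro T m hm
    have h1 := patTrans_Loc_subset (s T) T.1 R hm
    exact Loc_mono _ (by linarith [hs1 T]) ⟨hs2 T hm, h1.2⟩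
  have hfin : (𝒫 (Loc T₁ (R + C * R))).Finite := (h.fin T₁ hT₁ _).powerset
  obtain ⟨q, -, hq⟩ := (Ultrafilter.finite_biUnion_mem_iff (f := f) hfin
    (s := fun q => {T : Omega d Ps | patTrans d (s T) (Loc T.1 R) = q})).1 (by
      refine mem_of_superset univ_mem fun T _ => ?_
      exact Set.mem_biUnion (hsub T) rfl)
  obtain ⟨s₀, -, hs₀⟩ := (isCompact_closedBall (0 : Pt d) (C * R)).ultrafilter_le_nhds (f.map s)
    (by
      rw [le_principal_iff, Ultrafilter.coe_map, mem_map]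
      exact mem_of_superset univ_mem fun T _ => mem_closedBall_zero_iff.2 (hs1 T))
  have htend : Tendsto s f (𝓝 s₀) := hs₀
  refine ⟨patTrans d (-s₀) q, fun δ hδ => ?_⟩
  filter_upwards [hq, htend (Metric.ball_mem_nhds s₀ hδ)] with T h1 h2
  refine ⟨s₀ - s T, by rwa [← dist_eq_norm, dist_comm], ?_⟩
  have h1' : patTrans d (s T) (Loc T.1 R) = q := h1
  rw [← h1', patTrans_patTrans, patTrans_patTrans,
    show s T + (-s₀ + (s₀ - s T)) = 0 by abel, patTrans_zero]

lemma omega_compact (h : Good (TilingsOf d Ps) D C) : CompactSpace (Omega d Ps) := by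
  refine ⟨isCompact_iff_ultrafilter_le_nhds.2 fun f _ => ?_⟩
  have hstep := fun n : ℕ => compact_step h f (n + 1) (by linarith [(Nat.cast_nonneg n : (0:ℝ) ≤ n)])
  choose L hL using hstep
  have hLT : ∀ n, ∃ T ∈ TilingsOf d Ps, ∃ t, patTrans d t (L n) ⊆ T := by
    intro n
    obtain ⟨T, u, -, hT⟩ := (hL n 1 one_pos).exists
    exact ⟨T.1, T.2, u, hT ▸ Loc_subset _ _⟩
  have hcov : ∀ n : ℕ, closedBall (0 : Pt d) n ⊆ ⋃₀ L n := by
    intro n x hx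
    obtain ⟨T, u, hu, hT⟩ := (hL n 1 one_pos).exists
    have h1 : x + u ∈ supp d (Loc T.1 (n + 1)) := by
      refine ball_subset_supp_Loc (h.cover _ T.2) _ ?_
      rw [mem_closedBall_zero_iff] at *
      exact (norm_add_le _ _).trans (by linarith)
    rw [hT] at h1
    obtain ⟨_, ⟨m, hm, rfl⟩, y, hy, hyx⟩ := h1
    have : y = x := add_right_cancel hyx
    exact ⟨m, hm, this ▸ hy⟩
  have hLfin : ∀ n, (L n).Finite := by
    intro n
    obtain ⟨T, u, -, hT⟩ := (hL n 1 one_pos).exists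
    have h1 : L n = patTrans d (-u) (Loc T.1 (n + 1)) := by
      rw [hT, patTrans_patTrans, add_neg_cancel, patTrans_zero]
    rw [h1]
    exact patTrans_fin _ (h.fin _ T.2 _)
  have hmono : Monotone L := by
    intro n k hnk
    obtain ⟨m, hm, -⟩ := hcov n (mem_closedBall_self (Nat.cast_nonneg n))
    have hmprop : IsCompact m ∧ m.Nonempty := by
      obtain ⟨T, hT, t, ht⟩ := hLT n
      have h1 := (patTrans_subset_iff t).1 ht hm
      exact ⟨h.compact _ (h.trans T hT _) m h1, h.tile_ne (h.trans T hT _) h1⟩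
    obtain ⟨δ, hδ, hsm⟩ := small_shift (hLfin k) hm hmprop.1 hmprop.2
    obtain ⟨T, ⟨u, hu, hTu⟩, v, hv, hTv⟩ := ((hL n _ (half_pos hδ)).and (hL k _ (half_pos hδ))).exists
    have h1 : patTrans d u (L n) ⊆ patTrans d v (L k) := by
      rw [← hTu, ← hTv]
      exact Loc_mono _ (by have : (n : ℝ) ≤ k := by exact_mod_cast hnk
                           linarith)
    have h2 : patTrans d (u - v) (L n) ⊆ L k := by
      rw [sub_eq_add_neg, ← patTrans_patTrans, patTrans_subset_iff, neg_neg]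
      exact h1
    have h3 := hsm _ ((norm_sub_le u v).trans_lt (by linarith)) h2
    rwa [h3, patTrans_zero] at h2
  let T₀ : Omega d Ps := ⟨⋃ n, L n, h.limit L hmono hLT hcov⟩
  refine ⟨T₀, Set.mem_univ _, fun s hs => ?_⟩
  obtain ⟨R, δ, hδ, hn⟩ := (mem_nhds_iff_Nb h).1 hs
  have hfin := h.fin T₀.1 T₀.2 R
  obtain ⟨n, hn'⟩ := Directed.exists_mem_subset_of_finset_subset_biUnion (f := L)
    (s := hfin.toFinset) hmono.directed_le (by simpa using Loc_subset T₀.1 R)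
  rw [hfin.coe_toFinset] at hn'
  refine mem_of_superset (hL n δ hδ) (Set.Subset.trans ?_ hn)
  rintro T ⟨u, hu, hT⟩
  exact ⟨u, hu, (patTrans_mono u hn').trans (hT ▸ Loc_subset _ _)⟩

/-- locally determined sets -/
def LD (G : Set (Omega d Ps)) : Prop :=
  ∃ R : ℝ, ∀ S ∈ G, ∀ S' : Omega d Ps, Loc S.1 R ⊆ S'.1 → S' ∈ G

lemma LD_empty : LD (∅ : Set (Omega d Ps)) := ⟨0, fun _ h => h.elim⟩

lemma LD_union {G G' : Set (Omega d Ps)} (h : LD G) (h' : LD G') : LD (G ∪ G') := by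
  obtain ⟨R, hR⟩ := h
  obtain ⟨R', hR'⟩ := h'
  refine ⟨max R R', ?_⟩
  rintro S (hS | hS) S' hs
  · exact Or.inl (hR S hS S' ((Loc_mono _ (le_max_left _ _)).trans hs))
  · exact Or.inr (hR' S hS S' ((Loc_mono _ (le_max_right _ _)).trans hs))

theorem exists_basis (h : Good (TilingsOf d Ps) D C) :
    ∃ B : Set (Set (Omega d Ps)), B.Countable ∧ TopologicalSpace.IsTopologicalBasis B ∧
      ∀ G ∈ B, LD G := by
  obtain ⟨T₁, hT₁⟩ := h.nonempty
  obtain ⟨A, hAc, hAd⟩ := TopologicalSpace.exists_countable_dense (Pt d)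
  have hTc : T₁.Countable := by
    refine (Set.countable_iUnion fun n : ℕ => (h.fin T₁ hT₁ n).countable).mono ?_
    intro m hm
    obtain ⟨p, hp⟩ := h.tile_ne hT₁ hm
    obtain ⟨n, hn⟩ := exists_nat_ge ‖p‖
    exact Set.mem_iUnion.2 ⟨n, hm, p, hp, mem_closedBall_zero_iff.2 hn⟩
  have hQ := Set.countable_ofPred_finite_subset hTc
  refine ⟨(fun p : Set (Set (Pt d)) × Pt d × ℕ => Cyl p.1 (ball p.2.1 (1 / (p.2.2 + 1)))) ''
    ({t | t.Finite ∧ t ⊆ T₁} ×ˢ A ×ˢ Set.univ), ?_, ?_, ?_⟩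
  · exact (hQ.prod (hAc.prod Set.countable_univ)).image _
  · refine TopologicalSpace.isTopologicalBasis_of_isOpen_of_nhds ?_ ?_
    · rintro _ ⟨⟨q, x, k⟩, ⟨⟨hq, -⟩, -⟩, rfl⟩
      exact Cyl_open h hq isOpen_ball
    · intro T W hTW hW
      obtain ⟨R, δ, hδ, hn⟩ := (mem_nhds_iff_Nb h).1 (hW.mem_nhds hTW)
      obtain ⟨s, -, hs⟩ := h.lr (max R 1) (le_max_right _ _) T.1 T.2 T₁ hT₁
      obtain ⟨k, hk⟩ := exists_nat_one_div_lt (half_pos hδ)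
      obtain ⟨x, hxA, hx⟩ := hAd.exists_dist_lt (-s) (Nat.one_div_pos_of_nat (n := k) (α := ℝ))
      refine ⟨_, ⟨⟨patTrans d s (Loc T.1 (max R 1)), x, k⟩,
        ⟨⟨patTrans_fin _ (h.fin _ T.2 _), hs⟩, hxA, trivial⟩, rfl⟩, ⟨-s, hx, ?_⟩, ?_⟩
      · rw [patTrans_patTrans, add_neg_cancel, patTrans_zero]
        exact Loc_subset _ _
      · rintro S ⟨u, hu, hS⟩
        refine hn ⟨s + u, ?_, ?_⟩
        · have h1 : dist u (-s) < δ := by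
            have := dist_triangle_right u (-s) x
            have hu' : dist u x < 1 / (k + 1) := hu
            linarith
          rwa [dist_eq_norm, sub_neg_eq_add, add_comm] at h1
        · rw [← patTrans_patTrans]
          exact (patTrans_mono _ (patTrans_mono _ (Loc_mono _ (le_max_left _ _)))).trans hS
  · rintro _ ⟨⟨q, x, k⟩, ⟨⟨hq, hqT⟩, -⟩, rfl⟩
    obtain ⟨R, hR⟩ := h.fin_subset_Loc hT₁ hq hqT
    refine ⟨R + (‖x‖ + 1 / (k + 1)), ?_⟩
    rintro S ⟨u, hu, hS⟩ S' hs
    refine ⟨u, hu, Set.Subset.trans ?_ hs⟩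
    intro m hm
    have h1 := patTrans_Loc_subset u T₁ R (patTrans_mono u hR hm)
    have hu' : ‖u‖ ≤ ‖x‖ + 1 / (k + 1) := by
      have h2 : ‖u - x‖ < 1 / (k + 1) := by rw [← dist_eq_norm]; exact hu
      have h3 := norm_add_le (u - x) x
      rw [sub_add_cancel] at h3
      linarith
    exact Loc_mono _ (by linarith) (⟨hS hm, h1.2⟩ : m ∈ Loc S.1 (R + ‖u‖))

lemma act_val (h : Good (TilingsOf d Ps) D C) (t : Pt d) (S : Omega d Ps) :
    (omegaTranslate d Ps t S).1 = patTrans d (-t) S.1 := by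
  have h1 : omegaTranslate d Ps t S = ⟨patTrans d (-t) S.1, h.trans _ S.2 _⟩ :=
    dif_pos (h.trans _ S.2 _)
  rw [h1]

lemma act_add (h : Good (TilingsOf d Ps) D C) (s t : Pt d) (S : Omega d Ps) :
    omegaTranslate d Ps s (omegaTranslate d Ps t S) = omegaTranslate d Ps (s + t) S := by
  apply Subtype.ext
  rw [act_val h, act_val h, act_val h, patTrans_patTrans]
  congr 1
  abel

lemma act_cont (h : Good (TilingsOf d Ps) D C) :
    Continuous fun p : Pt d × Omega d Ps => omegaTranslate d Ps p.1 p.2 := by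
  rw [continuous_iff_continuousAt]
  rintro ⟨x, T⟩ s hs
  obtain ⟨R, δ, hδ, hn⟩ := (mem_nhds_iff_Nb h).1 hs
  rw [mem_map, nhds_prod_eq]
  refine mem_of_superset (prod_mem_prod (Metric.ball_mem_nhds x (half_pos hδ))
    ((mem_nhds_iff_Nb h).2 ⟨R + ‖-x‖, δ / 2, half_pos hδ, Subset.rfl⟩)) ?_
  rintro ⟨y, S⟩ ⟨hy, u, hu, hS⟩
  refine hn ⟨u + (x - y), ?_, ?_⟩
  · have h1 : ‖x - y‖ < δ / 2 := by rw [← dist_eq_norm, dist_comm]; exact hy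
    exact (norm_add_le _ _).trans_lt (by linarith)
  · simp only [act_val h]
    refine (patTrans_mono _ (Loc_patTrans_subset (-x) T.1 R)).trans ?_
    rw [patTrans_patTrans, show -x + (u + (x - y)) = u + -y by abel, ← patTrans_patTrans]
    exact patTrans_mono _ hS

lemma compare (h : Good (TilingsOf d Ps) D C) {G : Set (Omega d Ps)} (hG : LD G) :
    ∃ R : ℝ, 0 < R ∧ ∀ T S : Omega d Ps, ∃ t : Pt d, ∀ x ∈ closedBall (0 : Pt d) R,
      omegaTranslate d Ps x T ∈ G →
        x + t ∈ closedBall (0 : Pt d) ((2 * C + 1) * R) ∧ omegaTranslate d Ps (x + t) S ∈ G := by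
  obtain ⟨R₀, hR₀⟩ := hG
  refine ⟨max R₀ 1, by positivity, fun T S => ?_⟩
  set R := max R₀ 1
  have hR1 : 1 ≤ R := le_max_right _ _
  obtain ⟨t, ht, hs⟩ := h.lr (2 * R) (by linarith) T.1 T.2 S.1 S.2
  refine ⟨t, fun x hx hxG => ?_⟩
  rw [mem_closedBall_zero_iff] at *
  refine ⟨(norm_add_le _ _).trans (by nlinarith), hR₀ _ hxG _ ?_⟩
  rw [act_val h, act_val h]
  refine (Loc_patTrans_subset (-x) T.1 R₀).trans ?_
  refine (patTrans_mono _ (Loc_mono _ (show _ ≤ 2 * R from ?_))).trans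
    ((patTrans_mono (-x) ((patTrans_subset_iff t).1 hs)).trans ?_)
  · rw [norm_neg]; linarith [le_max_left R₀ 1]
  · rw [patTrans_patTrans, show -t + -x = -(x + t) by abel]

end AuxThree
section AuxFour
variable {d}

/-- Invariant probability measures of an action. -/
def InvProb {X : Type*} [MeasurableSpace X] (φ : Pt d → X → X) (μ : Measure X) : Prop :=
  IsProbabilityMeasure μ ∧ ∀ t, Measure.map (φ t) μ = μ

lemma uniq_pow {X : Type*} [MeasurableSpace X] (φ : Pt d → X → X) (hφ : ∀ t, Measurable (φ t))
    (c : ℝ) (hc0 : 0 < c) (hc1 : c < 1)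
    (hcmp : ∀ μ ν : Measure X, InvProb φ μ → InvProb φ ν → ∀ A, MeasurableSet A →
      c * ν.real A ≤ μ.real A) (n : ℕ) :
    ∀ μ ν : Measure X, InvProb φ μ → InvProb φ ν → ∀ A, MeasurableSet A →
      (1 - (1 - c) ^ n) * ν.real A ≤ μ.real A := by
  induction n with
  | zero => intro μ ν _ _ A _; simp
  | succ n ih =>
    intro μ ν hμ hν A hA
    have := hμ.1
    have := hν.1
    have hle : (ENNReal.ofReal c • ν) ≤ μ := by
      refine Measure.le_iff.2 fun s hs => ?_
      have := hcmp μ ν hμ hν s hs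
      rw [Measure.smul_apply, smul_eq_mul, ← ofReal_measureReal, ← ofReal_measureReal,
        ← ENNReal.ofReal_mul hc0.le]
      exact ENNReal.ofReal_le_ofReal this
    have : IsFiniteMeasure (ENNReal.ofReal c • ν) := isFiniteMeasure_of_le μ hle
    have hval : ∀ s, MeasurableSet s →
        (ENNReal.ofReal (1 - c)⁻¹ • (μ - ENNReal.ofReal c • ν)) s
          = ENNReal.ofReal ((1 - c)⁻¹ * (μ.real s - c * ν.real s)) := by
      intro s hs
      rw [Measure.smul_apply, Measure.sub_apply hs hle, Measure.smul_apply, smul_eq_mul,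
        smul_eq_mul, ← ofReal_measureReal, ← ofReal_measureReal,
        ← ENNReal.ofReal_mul hc0.le, ← ENNReal.ofReal_sub _ (by positivity),
        ← ENNReal.ofReal_mul (inv_nonneg.2 (by linarith))]
    have hpos : (0 : ℝ) < 1 - c := by linarith
    have hinv : InvProb φ (ENNReal.ofReal (1 - c)⁻¹ • (μ - ENNReal.ofReal c • ν)) := by
      refine ⟨⟨?_⟩, fun t => ?_⟩
      · rw [hval _ MeasurableSet.univ]
        simp only [probReal_univ, mul_one]
        rw [inv_mul_cancel₀ hpos.ne', ENNReal.ofReal_one]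
      · ext s hs
        rw [Measure.map_apply (hφ t) hs, hval _ hs, hval _ (hφ t hs)]
        have e1 : μ.real (φ t ⁻¹' s) = μ.real s := by
          conv_rhs => rw [← hμ.2 t]
          rw [map_measureReal_apply (hφ t) hs]
        have e2 : ν.real (φ t ⁻¹' s) = ν.real s := by
          conv_rhs => rw [← hν.2 t]
          rw [map_measureReal_apply (hφ t) hs]
        rw [e1, e2]
    have h1 := ih _ ν hinv hν A hA
    have h2 : (ENNReal.ofReal (1 - c)⁻¹ • (μ - ENNReal.ofReal c • ν)).real A
        = (1 - c)⁻¹ * (μ.real A - c * ν.real A) := by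
      rw [Measure.real, hval A hA, ENNReal.toReal_ofReal]
      have := hcmp μ ν hμ hν A hA
      exact mul_nonneg (inv_nonneg.2 hpos.le) (by linarith)
    rw [h2, inv_mul_eq_div, le_div_iff₀ hpos] at h1
    rw [pow_succ]
    linarith

lemma uniq_of_cmp {X : Type*} [MeasurableSpace X] (φ : Pt d → X → X)
    (hφ : ∀ t, Measurable (φ t)) (c : ℝ) (hc0 : 0 < c)
    (hcmp : ∀ μ ν : Measure X, InvProb φ μ → InvProb φ ν → ∀ A, MeasurableSet A →
      c * ν.real A ≤ μ.real A) (μ ν : Measure X) (hμ : InvProb φ μ) (hν : InvProb φ ν) :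
    μ = ν := by
  have hc0' : 0 < min c (1 / 2) := lt_min hc0 (by norm_num)
  have hc1' : min c (1 / 2) < 1 := (min_le_right _ _).trans_lt (by norm_num)
  have hcmp' : ∀ μ ν : Measure X, InvProb φ μ → InvProb φ ν → ∀ A, MeasurableSet A →
      min c (1 / 2) * ν.real A ≤ μ.real A := fun μ ν h1 h2 A hA =>
    (mul_le_mul_of_nonneg_right (min_le_left _ _) measureReal_nonneg).trans (hcmp μ ν h1 h2 A hA)
  have key : ∀ μ ν : Measure X, InvProb φ μ → InvProb φ ν → ∀ A, MeasurableSet A →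
      ν.real A ≤ μ.real A := by
    intro μ ν h1 h2 A hA
    have ht : Tendsto (fun n : ℕ => (1 - (1 - min c (1 / 2)) ^ n) * ν.real A) atTop
        (𝓝 ((1 - 0) * ν.real A)) :=
      ((tendsto_pow_atTop_nhds_zero_of_lt_one (by linarith) (by linarith)).const_sub 1).mul_const _
    have := le_of_tendsto' ht fun n => uniq_pow φ hφ _ hc0' hc1' hcmp' n μ ν h1 h2 A hA
    simpa using this
  have := hμ.1
  have := hν.1
  ext s hs
  rw [← ofReal_measureReal, ← ofReal_measureReal,
    le_antisymm (key ν μ hν hμ s hs) (key μ ν hμ hν s hs)]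

lemma avg_eq {X : Type*} [TopologicalSpace X] [SecondCountableTopology X]
    [MeasurableSpace X] [BorelSpace X] (φ : Pt d → X → X)
    (hφ : Continuous fun p : Pt d × X => φ p.1 p.2) (G : Set X) (hG : IsOpen G)
    (ν : Measure X) (hν : InvProb φ ν) (r : ℝ) :
    ∫⁻ T, volume {x : Pt d | x ∈ closedBall (0 : Pt d) r ∧ φ x T ∈ G} ∂ν
      = ν G * volume (closedBall (0 : Pt d) r) := by
  have := hν.1
  have hm : MeasurableSet {p : Pt d × X | p.1 ∈ closedBall (0 : Pt d) r ∧ φ p.1 p.2 ∈ G} :=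
    (measurable_fst isClosed_closedBall.measurableSet).inter
      (hφ.measurable hG.measurableSet)
  have h1 := Measure.prod_apply (μ := (volume : Measure (Pt d))) (ν := ν) hm
  have h2 := Measure.prod_apply_symm (μ := (volume : Measure (Pt d))) (ν := ν) hm
  have h3 : ∫⁻ T, volume {x : Pt d | x ∈ closedBall (0 : Pt d) r ∧ φ x T ∈ G} ∂ν
      = ∫⁻ x : Pt d, ν (Prod.mk x ⁻¹' {p : Pt d × X | p.1 ∈ closedBall (0 : Pt d) r ∧
        φ p.1 p.2 ∈ G}) := h2.symm.trans h1
  rw [h3]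
  have h4 : ∀ x : Pt d, ν (Prod.mk x ⁻¹' {p : Pt d × X | p.1 ∈ closedBall (0 : Pt d) r ∧
        φ p.1 p.2 ∈ G}) = (closedBall (0 : Pt d) r).indicator (fun _ => ν G) x := by
    intro x
    by_cases hx : x ∈ closedBall (0 : Pt d) r
    · rw [Set.indicator_of_mem hx]
      have hmx : Measurable (φ x) := (hφ.comp (Continuous.prodMk_right x)).measurable
      conv_rhs => rw [← hν.2 x, Measure.map_apply hmx hG.measurableSet]
      congr 1
      ext T
      exact ⟨fun h => h.2, fun h => ⟨hx, h⟩⟩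
    · rw [Set.indicator_of_notMem hx]
      have : (Prod.mk x ⁻¹' {p : Pt d × X | p.1 ∈ closedBall (0 : Pt d) r ∧
        φ p.1 p.2 ∈ G}) = ∅ := by
        ext T
        exact ⟨fun h => hx h.1, fun h => h.elim⟩
      rw [this, measure_empty]
  rw [lintegral_congr h4, lintegral_indicator isClosed_closedBall.measurableSet]
  simp

lemma cmp_open {X : Type*} [TopologicalSpace X] [SecondCountableTopology X]
    [MeasurableSpace X] [BorelSpace X] (φ : Pt d → X → X)
    (hφ : Continuous fun p : Pt d × X => φ p.1 p.2) (G : Set X) (hG : IsOpen G)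
    (K R : ℝ) (hK : 0 < K) (hR : 0 < R)
    (hcmp : ∀ T S, ∃ t, ∀ x ∈ closedBall (0 : Pt d) R, φ x T ∈ G →
      x + t ∈ closedBall (0 : Pt d) (K * R) ∧ φ (x + t) S ∈ G)
    (μ ν : Measure X) (hμ : InvProb φ μ) (hν : InvProb φ ν) :
    ν G ≤ ENNReal.ofReal (K ^ Module.finrank ℝ (Pt d)) * μ G := by
  have := hμ.1
  have := hν.1
  have h1 : ∀ T S, volume {x : Pt d | x ∈ closedBall (0 : Pt d) R ∧ φ x T ∈ G} ≤
      volume {x : Pt d | x ∈ closedBall (0 : Pt d) (K * R) ∧ φ x S ∈ G} := by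
    intro T S
    obtain ⟨t, ht⟩ := hcmp T S
    rw [← measure_preimage_add_right (volume : Measure (Pt d)) t
      {x : Pt d | x ∈ closedBall (0 : Pt d) (K * R) ∧ φ x S ∈ G}]
    exact measure_mono fun x hx => ht x hx.1 hx.2
  have h2 : ∀ S, ν G * volume (closedBall (0 : Pt d) R) ≤
      volume {x : Pt d | x ∈ closedBall (0 : Pt d) (K * R) ∧ φ x S ∈ G} := by
    intro S
    rw [← avg_eq φ hφ G hG ν hν R]
    refine (lintegral_mono fun T => h1 T S).trans ?_
    simp
  have h3 : ν G * volume (closedBall (0 : Pt d) R) ≤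
      μ G * volume (closedBall (0 : Pt d) (K * R)) := by
    rw [← avg_eq φ hφ G hG μ hμ (K * R)]
    refine le_trans ?_ (lintegral_mono h2)
    simp
  rw [Measure.addHaar_closedBall_mul _ _ hK.le hR.le, ← mul_assoc] at h3
  rw [mul_comm (ENNReal.ofReal _)]
  refine (ENNReal.mul_le_mul_iff_left ?_ ?_).1 h3
  · exact (measure_closedBall_pos _ _ hR).ne'
  · exact measure_closedBall_lt_top.ne

lemma cmp_all {X : Type*} [TopologicalSpace X] [MeasurableSpace X] [BorelSpace X]
    (P : Set X → Prop) (hP0 : P ∅) (hPu : ∀ s t, P s → P t → P (s ∪ t))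
    (B : Set (Set X)) (hBc : B.Countable) (hB : TopologicalSpace.IsTopologicalBasis B)
    (hBP : ∀ s ∈ B, P s) (μ ν : Measure X) [μ.OuterRegular] (K : ENNReal) (hK0 : K ≠ 0)
    (hKt : K ≠ ⊤)
    (hcmp : ∀ G, IsOpen G → P G → ν G ≤ K * μ G) (A : Set X) : ν A ≤ K * μ A := by
  have hopen : ∀ U, IsOpen U → ν U ≤ K * μ U := by
    intro U hU
    have hUe := hB.open_eq_sUnion' hU
    have hc : (insert ∅ {s ∈ B | s ⊆ U}).Countable :=
      (hBc.mono (fun s hs => hs.1)).insert _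
    obtain ⟨f, hf⟩ := hc.exists_eq_range (insert_nonempty _ _)
    have hfm : ∀ n, f n ∈ insert ∅ {s ∈ B | s ⊆ U} := fun n => hf ▸ mem_range_self n
    have hfo : ∀ n, IsOpen (f n) ∧ P (f n) ∧ f n ⊆ U := by
      intro n
      rcases hfm n with h | h
      · rw [h]; exact ⟨isOpen_empty, hP0, empty_subset _⟩
      · exact ⟨hB.isOpen h.1, hBP _ h.1, h.2⟩
    have hUf : ⋃ n, f n = U := by
      apply subset_antisymm
      · exact iUnion_subset fun n => (hfo n).2.2
      · intro x hx
        rw [hUe] at hx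
        obtain ⟨s, hs, hxs⟩ := hx
        have : s ∈ range f := hf ▸ mem_insert_of_mem _ hs
        obtain ⟨n, rfl⟩ := this
        exact mem_iUnion.2 ⟨n, hxs⟩
    have hacc : ∀ n, IsOpen (accumulate f n) ∧ P (accumulate f n) := by
      intro n
      induction n with
      | zero =>
        have : accumulate f 0 = f 0 := by
          ext x; simp
        rw [this]; exact ⟨(hfo 0).1, (hfo 0).2.1⟩
      | succ n ih =>
        rw [Set.accumulate_succ]
        exact ⟨ih.1.union (hfo _).1, hPu _ _ ih.2 (hfo _).2.1⟩
    have ht := tendsto_measure_iUnion_accumulate (μ := ν) (f := f)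
    rw [hUf] at ht
    refine le_of_tendsto' ht fun n => (hcmp _ (hacc n).1 (hacc n).2).trans ?_
    gcongr
    exact (iUnion₂_subset fun m _ => (hfo m).2.2)
  rw [← ENNReal.inv_mul_le_iff hK0 hKt]
  refine le_of_forall_gt_imp_ge_of_dense fun a ha => ?_
  obtain ⟨U, hAU, hUo, hUa⟩ := A.exists_isOpen_lt_of_lt a ha
  rw [ENNReal.inv_mul_le_iff hK0 hKt]
  refine (measure_mono hAU).trans ((hopen U hUo).trans ?_)
  gcongr

end AuxFour
section AuxFive
variable {d}

lemma ball_shift_est (g : Pt d → ℝ) (hg : Continuous g) (M : ℝ) (hM : ∀ x, ‖g x‖ ≤ M)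
    (t : Pt d) (r : ℝ) :
    ‖(∫ x in closedBall (0 : Pt d) r, g (x + t)) - ∫ x in closedBall (0 : Pt d) r, g x‖ ≤
      2 * M * (volume.real (closedBall (0 : Pt d) (r + ‖t‖))
        - volume.real (closedBall (0 : Pt d) r)) := by
  have e1 : (∫ x in closedBall (0 : Pt d) r, g (x + t)) = ∫ x in closedBall t r, g x := by
    have hp : MeasurePreserving (fun x : Pt d => x + t) volume volume :=
      measurePreserving_add_right volume t
    have := hp.setIntegral_preimage_emb (measurableEmbedding_addRight t) g (closedBall t r)
    rw [← this]
    congr 2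
    ext x
    simp [mem_closedBall, dist_eq_norm]
  have est : ∀ y : Pt d, closedBall y r ⊆ closedBall (0 : Pt d) (r + ‖t‖) →
      ‖(∫ x in closedBall (0 : Pt d) (r + ‖t‖), g x) - ∫ x in closedBall y r, g x‖ ≤
        M * (volume.real (closedBall (0 : Pt d) (r + ‖t‖))
        - volume.real (closedBall (0 : Pt d) r)) := by
    intro y hy
    rw [← setIntegral_sdiff isClosed_closedBall.measurableSet
      (hg.continuousOn.integrableOn_compact (isCompact_closedBall _ _)) hy]
    refine (norm_setIntegral_le_of_norm_le_const
      ((measure_mono sdiff_subset).trans_lt measure_closedBall_lt_top) fun x _ => hM x).trans_eq ?_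
    rw [measureReal_sdiff hy isClosed_closedBall.measurableSet measure_closedBall_lt_top.ne]
    congr 2
    rw [Measure.real, Measure.real, Measure.addHaar_closedBall_center]
  have h1 := est t (closedBall_subset_closedBall' (by simp))
  have h2 := est 0 (closedBall_subset_closedBall (by simp))
  rw [e1]
  have h3 := norm_sub_le ((∫ x in closedBall (0 : Pt d) (r + ‖t‖), g x)
    - ∫ x in closedBall (0 : Pt d) r, g x)
    ((∫ x in closedBall (0 : Pt d) (r + ‖t‖), g x) - ∫ x in closedBall t r, g x)
  rw [sub_sub_sub_cancel_left] at h3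
  linarith

lemma ball_ratio_tendsto (a : ℝ) (ha : 0 ≤ a) (M : ℝ) :
    Tendsto (fun n : ℕ => (volume.real (closedBall (0 : Pt d) ((n : ℝ) + 1)))⁻¹ *
      (2 * M * (volume.real (closedBall (0 : Pt d) ((n : ℝ) + 1 + a))
        - volume.real (closedBall (0 : Pt d) ((n : ℝ) + 1))))) atTop (𝓝 0) := by
  have hv : 0 < volume.real (ball (0 : Pt d) 1) :=
    ENNReal.toReal_pos (measure_ball_pos _ _ one_pos).ne' measure_ball_lt_top.ne
  have hb : ∀ r : ℝ, 0 ≤ r → volume.real (closedBall (0 : Pt d) r)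
      = r ^ Module.finrank ℝ (Pt d) * volume.real (ball (0 : Pt d) 1) := by
    intro r hr
    rw [Measure.real, Measure.addHaar_closedBall _ _ hr, ENNReal.toReal_mul,
      ENNReal.toReal_ofReal (by positivity), Measure.real]
  have h0 : Tendsto (fun n : ℕ => a / ((n : ℝ) + 1)) atTop (𝓝 0) :=
    Tendsto.div_atTop tendsto_const_nhds
      (tendsto_atTop_add_const_right _ _ tendsto_natCast_atTop_atTop)
  have h1 : Tendsto (fun n : ℕ => 2 * M * ((1 + a / ((n : ℝ) + 1)) ^ Module.finrank ℝ (Pt d) - 1))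
      atTop (𝓝 (2 * M * ((1 + 0) ^ Module.finrank ℝ (Pt d) - 1))) :=
    (((h0.const_add 1).pow _).sub_const 1).const_mul _
  have h2 : (2 * M * (((1 : ℝ) + 0) ^ Module.finrank ℝ (Pt d) - 1)) = 0 := by simp
  rw [h2] at h1
  refine h1.congr fun n => ?_
  have hn : (0 : ℝ) < (n : ℝ) + 1 := by positivity
  rw [hb _ hn.le, hb _ (by linarith)]
  have : (n : ℝ) + 1 + a = ((n : ℝ) + 1) * (1 + a / ((n : ℝ) + 1)) := by field_simp
  rw [this, mul_pow]
  have hp : (0 : ℝ) < ((n : ℝ) + 1) ^ Module.finrank ℝ (Pt d) := by positivity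
  field_simp

lemma exists_inv {X : Type*} [TopologicalSpace X] [SecondCountableTopology X] [T2Space X]
    [CompactSpace X] [MeasurableSpace X] [BorelSpace X] (x0 : X) (φ : Pt d → X → X)
    (hφ : Continuous fun p : Pt d × X => φ p.1 p.2)
    (hadd : ∀ s t x, φ s (φ t x) = φ (s + t) x) : ∃ μ : Measure X, InvProb φ μ := by
  have horb : Continuous fun x : Pt d => φ x x0 := hφ.comp (Continuous.prodMk_left x0)
  have hact : ∀ t, Continuous (φ t) := fun t => hφ.comp (Continuous.prodMk_right t)
  let V : ℕ → Set (Pt d) := fun n => closedBall (0 : Pt d) ((n : ℝ) + 1)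
  have hVpos : ∀ n, volume (V n) ≠ 0 := fun n => (measure_closedBall_pos _ _ (by positivity)).ne'
  have hVtop : ∀ n, volume (V n) ≠ ⊤ := fun n => measure_closedBall_lt_top.ne
  let m : ℕ → Measure X := fun n =>
    Measure.map (fun x : Pt d => φ x x0) ((volume (V n))⁻¹ • volume.restrict (V n))
  have hmprob : ∀ n, IsProbabilityMeasure (m n) := by
    intro n
    have : IsProbabilityMeasure ((volume (V n))⁻¹ • (volume : Measure (Pt d)).restrict (V n)) := by
      constructor
      rw [Measure.smul_apply, Measure.restrict_apply_univ, smul_eq_mul,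
        ENNReal.inv_mul_cancel (hVpos n) (hVtop n)]
    exact Measure.isProbabilityMeasure_map horb.aemeasurable
  have hinteg : ∀ n (f : X → ℝ), Continuous f → ∫ y, f y ∂(m n)
      = (volume.real (V n))⁻¹ * ∫ x in V n, f (φ x x0) := by
    intro n f hf
    rw [integral_map horb.aemeasurable hf.aestronglyMeasurable, integral_smul_measure,
      ENNReal.toReal_inv, smul_eq_mul]
    rfl
  let pm : ℕ → ProbabilityMeasure X := fun n => ⟨m n, hmprob n⟩
  obtain ⟨μ, -, hμ⟩ := (isCompact_univ (X := ProbabilityMeasure X)).ultrafilter_le_nhds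
    ((hyperfilter ℕ).map pm) (by simp)
  have hlim : Tendsto pm (hyperfilter ℕ : Filter ℕ) (𝓝 μ) := hμ
  rw [ProbabilityMeasure.tendsto_iff_forall_integral_tendsto] at hlim
  refine ⟨(μ : Measure X), inferInstance, fun t => ?_⟩
  have hmt : IsProbabilityMeasure (Measure.map (φ t) (μ : Measure X)) :=
    Measure.isProbabilityMeasure_map (hact t).aemeasurable
  refine ext_of_forall_integral_eq_of_IsFiniteMeasure fun f => ?_
  rw [integral_map (hact t).aemeasurable f.continuous.aestronglyMeasurable]
  have l1 := hlim f
  have l2 := hlim (f.compContinuous ⟨φ t, hact t⟩)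
  have l3 := l2.sub l1
  have l4 : Tendsto (fun n => (∫ y, (f.compContinuous ⟨φ t, hact t⟩) y ∂(pm n : Measure X))
      - ∫ y, f y ∂(pm n : Measure X)) (hyperfilter ℕ : Filter ℕ) (𝓝 0) := by
    have hr := (ball_ratio_tendsto (d := d) ‖t‖ (norm_nonneg t) ‖f‖).mono_left
      (Nat.hyperfilter_le_atTop)
    refine squeeze_zero_norm (fun n => ?_) hr
    have e1 := hinteg n f f.continuous
    have e2 := hinteg n (fun y => f (φ t y)) (f.continuous.comp (hact t))
    have e3 := ball_shift_est (fun x => f (φ x x0)) (f.continuous.comp horb) ‖f‖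
      (fun x => f.norm_coe_le_norm _) t ((n : ℝ) + 1)
    change ‖(∫ y, f (φ t y) ∂(m n)) - ∫ y, f y ∂(m n)‖ ≤ _
    rw [e1, e2, ← mul_sub, norm_mul, Real.norm_of_nonneg (inv_nonneg.2 measureReal_nonneg)]
    refine mul_le_mul_of_nonneg_left ?_ (inv_nonneg.2 measureReal_nonneg)
    refine le_trans (le_of_eq ?_) e3
    simp only [hadd, add_comm t]
    rfl
  have := tendsto_nhds_unique l3 l4
  exact sub_eq_zero.1 this

end AuxFive
/-- Corollary 4.6, unique ergodicity. For a nonempty admissible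
linearly repetitive `Ps`, the translation action of `ℝ^d` on the compact metric space
`Ω(Ps)` admits exactly one invariant Borel probability measure. -/
theorem omega_uniquely_ergodic (d : ℕ) (Ps : Set (Set (Set (Pt d))))
    (hne : Ps.Nonempty) (hadm : Admissible d Ps) (hlr : LinearlyRepetitive d Ps) :
    letI : TopologicalSpace (Omega d Ps) := omegaTop d Ps
    letI : MeasurableSpace (Omega d Ps) := borel (Omega d Ps)
    ∃! μ : Measure (Omega d Ps), IsProbabilityMeasure μ ∧
      ∀ t : Pt d, Measure.map (omegaTranslate d Ps t) μ = μ := by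
  obtain ⟨D, C, h⟩ := exists_good hne hadm hlr
  letI : TopologicalSpace (Omega d Ps) := omegaTop d Ps
  letI : MeasurableSpace (Omega d Ps) := borel (Omega d Ps)
  have : BorelSpace (Omega d Ps) := ⟨rfl⟩
  have : T2Space (Omega d Ps) := omega_t2 h
  have : CompactSpace (Omega d Ps) := omega_compact h
  obtain ⟨B, hBc, hB, hBL⟩ := exists_basis h
  have : SecondCountableTopology (Omega d Ps) := hB.secondCountableTopology hBc
  obtain ⟨T₀, hT₀⟩ := h.nonempty
  have hcont : Continuous fun p : Pt d × Omega d Ps => omegaTranslate d Ps p.1 p.2 := act_cont h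
  have hmeas : ∀ t, Measurable (omegaTranslate d Ps t) := fun t =>
    (hcont.comp (Continuous.prodMk_right t)).measurable
  obtain ⟨μ, hμ⟩ := exists_inv (X := Omega d Ps) ⟨T₀, hT₀⟩ (omegaTranslate d Ps) hcont
    (fun s t S => act_add h s t S)
  refine ⟨μ, hμ, fun ν hν => ?_⟩
  have hC := h.C_pos
  have hK : 0 < 2 * C + 1 := by linarith
  have hKp : 0 < (2 * C + 1) ^ Module.finrank ℝ (Pt d) := by positivity
  refine uniq_of_cmp (omegaTranslate d Ps) hmeas ((2 * C + 1) ^ Module.finrank ℝ (Pt d))⁻¹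
    (inv_pos.2 hKp) ?_ ν μ hν hμ
  intro μ₁ ν₁ h₁ h₂ A _
  have := h₁.1
  have := h₂.1
  have hle : ν₁ A ≤ ENNReal.ofReal ((2 * C + 1) ^ Module.finrank ℝ (Pt d)) * μ₁ A := by
    refine cmp_all LD LD_empty (fun s t hs ht => LD_union hs ht) B hBc hB hBL μ₁ ν₁ _
      (ENNReal.ofReal_pos.2 hKp).ne' ENNReal.ofReal_ne_top (fun G hG hGL => ?_) A
    obtain ⟨R, hR, hcmp⟩ := compare h hGL
    exact cmp_open (omegaTranslate d Ps) hcont G hG (2 * C + 1) R hK hR hcmp μ₁ ν₁ h₁ h₂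
  rw [← ofReal_measureReal, ← ofReal_measureReal, ← ENNReal.ofReal_mul hKp.le,
    ENNReal.ofReal_le_ofReal_iff (mul_nonneg hKp.le measureReal_nonneg)] at hle
  rw [inv_mul_le_iff₀ hKp]
  exact hle

end
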